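/- In 𝔽₂[t₁,…,t₆], the product ∏_{1≤j<k≤6} (1 + t_j + t_k) is congruent to 1 + (e₃e₅ + e₄² + e₂⁴) + (e₂e₅² + e₃²e₆ + e₃e₄e₅ + e₂²e₃e₅ + e₂²e₄² + e₃⁴ + e₆²) + (e₃e₅e₆ + e₄e₅² + e₂²e₅² + e₂e₃²e₆ + e₂e₃e₄e₅ + e₃³e₅ + e₃²e₄²) + (e₅³ + e₂e₃e₅² + e₃³e₆ + e₃²e₄e₅) modulo the ideal generated by e₁. -/

import Mathlib

open MvPolynomial Finset

/-- The `i`-th elementary symmetric polynomial in `𝔽₂[t₁,…,t₆]`. -/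
noncomputable def e (i : ℕ) : MvPolynomial (Fin 6) (ZMod 2) :=
  esymm (Fin 6) (ZMod 2) i

/-! Put `f x = ∏ᵢ (x + tᵢ)`. The square of the product is `∏ⱼ f (tⱼ + 1)`, because the diagonal
factors are `1 + 2 tⱼ = 1`. When `e₁ = 0` in characteristic two, `f (x + 1) = f x + h (x² + x)` for
a quadratic `h`, so the square equals `∏ⱼ h (tⱼ² + tⱼ)`. Over an algebraically closed field, write
the roots of `h` as `ρ² + ρ` and `σ² + σ`; the square becomes `f ρ · f (ρ + 1) · f σ · f (σ + 1)`,
which is `(f ρ · f σ)²`, and square roots are unique in characteristic two. Modulo `h (x² + x)`,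
`f x` is linear in `x² + x`, so `f ρ · f σ` is symmetric in the roots of `h`, hence a polynomial
in the coefficients of `f`. The passage to algebraically closed fields is possible because `(e₁)`
is the kernel of a substitution endomorphism of the polynomial ring, which is a domain. -/

lemma prod_prod_eq_sq_prod_lt {ι M : Type*} [Fintype ι] [LinearOrder ι] [CommMonoid M]
    (F : ι → ι → M) (hsymm : ∀ i j, F i j = F j i) (hdiag : ∀ i, F i i = 1) :
    ∏ i, ∏ j, F i j = (∏ p ∈ univ.filter (fun p : ι × ι => p.1 < p.2), F p.1 p.2) ^ 2 := by
  have prod_gt_eq_prod_lt : ∏ p ∈ univ.filter (fun p : ι × ι => p.2 < p.1), F p.1 p.2 =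
      ∏ p ∈ univ.filter (fun p : ι × ι => p.1 < p.2), F p.1 p.2 :=
    prod_equiv (Equiv.prodComm ι ι) (by simp) fun p _ => hsymm p.1 p.2
  have prod_not_lt_eq_prod_gt : ∏ p ∈ univ.filter (fun p : ι × ι => ¬p.1 < p.2), F p.1 p.2 =
      ∏ p ∈ univ.filter (fun p : ι × ι => p.2 < p.1), F p.1 p.2 := by
    refine (prod_subset (fun _ => ?_) fun p hle hgt => ?_).symm
    · simpa using le_of_lt
    · simp only [mem_filter_univ, not_lt] at hle hgt
      rw [hle.antisymm hgt, hdiag]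
  rw [← Fintype.prod_prod_type',
    ← prod_filter_mul_prod_filter_not univ (fun p : ι × ι => p.1 < p.2),
    prod_not_lt_eq_prod_gt, prod_gt_eq_prod_lt, sq]

lemma exists_add_eq_and_mul_eq {K : Type*} [Field K] [IsAlgClosed K] (b c : K) :
    ∃ x y, x + y = b ∧ x * y = c := by
  obtain ⟨x, hx⟩ := IsAlgClosed.exists_root
    (.C 1 * .X ^ 2 + .C (-b) * .X + .C c : Polynomial K)
    (by rw [Polynomial.degree_quadratic one_ne_zero]; decide)
  have root_eq : x ^ 2 - b * x + c = 0 := by simpa [sub_eq_add_neg] using hx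
  exact ⟨x, b - x, by ring, by linear_combination -root_eq⟩

lemma exists_sq_add_self_eq {K : Type*} [Field K] [IsAlgClosed K] (a : K) :
    ∃ x, x ^ 2 + x = a := by
  obtain ⟨x, y, hadd, hmul⟩ := exists_add_eq_and_mul_eq (-1) (-a)
  exact ⟨x, by linear_combination x * hadd - hmul⟩

lemma prod_add_eq_sum_aeval_esymm {σ R A : Type*} [Fintype σ] [CommRing R] [CommRing A]
    [Algebra R A] (t : σ → A) (x : A) :
    ∏ i, (x + t i) = ∑ j ∈ range (Fintype.card σ + 1),
      aeval t (esymm σ R j) * x ^ (Fintype.card σ - j) := by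
  have vieta := congrArg (Polynomial.eval x)
    (Multiset.prod_X_add_C_eq_sum_esymm (univ.val.map t))
  simpa [aeval_esymm_eq_multiset_esymm, Polynomial.eval_finsetSum, Polynomial.eval_prod]
    using vieta

section Specialization

universe u v

variable {σ : Type u} {R : Type v} [CommRing R]

lemma sub_aeval_mem_of_forall_X_sub_mem {I : Ideal (MvPolynomial σ R)}
    {g : σ → MvPolynomial σ R} (hg : ∀ i, X i - g i ∈ I) (p : MvPolynomial σ R) :
    p - aeval g p ∈ I := by
  have mk_comp_aeval : (Ideal.Quotient.mkₐ R I).comp (aeval g) = Ideal.Quotient.mkₐ R I :=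
    algHom_ext fun i => by
      simpa using ((Ideal.Quotient.mk_eq_mk_iff_sub_mem _ _).2 (hg i)).symm
  exact (Ideal.Quotient.mk_eq_mk_iff_sub_mem _ _).1 (DFunLike.congr_fun mk_comp_aeval p).symm

lemma mem_span_esymm_one_of_forall_aeval_eq_zero [Fintype σ] [Nonempty σ] [IsDomain R]
    {p : MvPolynomial σ R}
    (hp : ∀ (K : Type (max u v)) [Field K] [IsAlgClosed K] [Algebra R K] (t : σ → K),
      ∑ i, t i = 0 → aeval t p = 0) :
    p ∈ Ideal.span {esymm σ R 1} := by
  classical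
  let i₀ := Classical.arbitrary σ
  -- Eliminating the variable `X i₀` gives the generic point of the hyperplane `e₁ = 0`.
  let g : σ → MvPolynomial σ R := fun i => X i - if i = i₀ then esymm σ R 1 else 0
  have sum_g : ∑ i, g i = 0 := by simp [g, esymm_one, sum_sub_distrib]
  have X_sub_g_mem (i : σ) : X i - g i ∈ Ideal.span {esymm σ R 1} := by
    by_cases h : i = i₀ <;> simp [g, h]
  let K := AlgebraicClosure (FractionRing (MvPolynomial σ R))
  have algebraMap_aeval_g : algebraMap (MvPolynomial σ R) K (aeval g p) = 0 := by
    rw [← aeval_algebraMap_apply]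
    exact hp K _ (by
      simpa only [Function.comp_apply, map_sum, map_zero] using congrArg (algebraMap _ K) sum_g)
  have : FaithfulSMul (MvPolynomial σ R) K :=
    .trans (MvPolynomial σ R) (FractionRing (MvPolynomial σ R)) K
  have aeval_g : aeval g p = 0 := by
    rwa [FaithfulSMul.algebraMap_eq_zero_iff] at algebraMap_aeval_g
  simpa only [aeval_g, sub_zero] using sub_aeval_mem_of_forall_X_sub_mem X_sub_g_mem p

end Specialization

section DepressedSextic

variable {R : Type*} [CommRing R]

/-- The monic sextic `f` without `x⁵` term whose coefficients `c 2, …, c 6` are indexed, as Chern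
classes are, by codegree. -/
def depressedSextic (c : ℕ → R) (x : R) : R :=
  x ^ 6 + c 2 * x ^ 4 + c 3 * x ^ 3 + c 4 * x ^ 2 + c 5 * x + c 6

/-- The constant term of `shiftQuadratic`. -/
def shiftConst (c : ℕ → R) : R :=
  1 + c 2 + c 3 + c 4 + c 5

/-- The quadratic `h` with `f (x + 1) = f x + h (x² + x)` in characteristic two, where `f` is the
depressed sextic with coefficients `c`. -/
def shiftQuadratic (c : ℕ → R) (y : R) : R :=
  y ^ 2 + c 3 * y + shiftConst c

/-- The slope of the remainder of `f`, as a linear polynomial in `y = x² + x`, on division by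
`shiftQuadratic c (x² + x)` in characteristic two. -/
def remainderSlope (c : ℕ → R) : R :=
  (1 + c 2 + c 3) * c 3 + c 5

/-- The constant term of the same remainder as `remainderSlope`. -/
def remainderConst (c : ℕ → R) : R :=
  (1 + c 2 + c 3) * shiftConst c + c 6

/-- The total Chern class of `λ²` in terms of the Chern classes `c`, in closed form: the resultant
of `shiftQuadratic c` with the linear polynomial of coefficients `remainderSlope c` and
`remainderConst c`. -/
def lambdaTwoChern (c : ℕ → R) : R :=
  remainderSlope c ^ 2 * shiftConst c + remainderSlope c * remainderConst c * c 3 +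
    remainderConst c ^ 2

lemma map_lambdaTwoChern {F S : Type*} [CommRing S] [FunLike F R S] [RingHomClass F R S] (φ : F)
    (c : ℕ → R) : φ (lambdaTwoChern c) = lambdaTwoChern fun i => φ (c i) := by
  simp only [lambdaTwoChern, remainderSlope, remainderConst, shiftConst, map_add, map_mul,
    map_pow, map_one]

lemma prod_add_eq_depressedSextic {A : Type*} [CommRing A] [Algebra R A] {t : Fin 6 → A}
    (ht : ∑ i, t i = 0) (x : A) :
    ∏ i, (x + t i) = depressedSextic (fun i => aeval t (esymm (Fin 6) R i)) x := by
  have esymm_one_eq_zero : aeval t (esymm (Fin 6) R 1) = 0 := by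
    simpa only [esymm_one, map_sum, aeval_X] using ht
  rw [prod_add_eq_sum_aeval_esymm (R := R)]
  simp only [Fintype.card_fin, sum_range_succ, range_zero, sum_empty, esymm_zero, map_one,
    esymm_one_eq_zero, depressedSextic]
  ring

variable [CharP R 2] (c : ℕ → R)

lemma depressedSextic_add_one (x : R) :
    depressedSextic c (x + 1) = depressedSextic c x + shiftQuadratic c (x ^ 2 + x) := by
  unfold depressedSextic shiftQuadratic shiftConst
  grind

lemma depressedSextic_eq_mul_shiftQuadratic_add (x : R) :
    depressedSextic c x = (x ^ 2 + 1 + c 2 + c 3) * shiftQuadratic c (x ^ 2 + x) +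
      (remainderSlope c * (x ^ 2 + x) + remainderConst c) := by
  unfold depressedSextic shiftQuadratic remainderSlope remainderConst shiftConst
  grind

lemma lambdaTwoChern_eq :
    lambdaTwoChern c =
      1 + (c 3 * c 5 + c 4 ^ 2 + c 2 ^ 4)
        + (c 2 * c 5 ^ 2 + c 3 ^ 2 * c 6 + c 3 * c 4 * c 5
            + c 2 ^ 2 * c 3 * c 5 + c 2 ^ 2 * c 4 ^ 2 + c 3 ^ 4 + c 6 ^ 2)
        + (c 3 * c 5 * c 6 + c 4 * c 5 ^ 2 + c 2 ^ 2 * c 5 ^ 2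
            + c 2 * c 3 ^ 2 * c 6 + c 2 * c 3 * c 4 * c 5
            + c 3 ^ 3 * c 5 + c 3 ^ 2 * c 4 ^ 2)
        + (c 5 ^ 3 + c 2 * c 3 * c 5 ^ 2 + c 3 ^ 3 * c 6 + c 3 ^ 2 * c 4 * c 5) := by
  unfold lambdaTwoChern remainderSlope remainderConst shiftConst
  grind

end DepressedSextic

section AlgClosedCharTwo

variable {K : Type*} [Field K] [IsAlgClosed K] [CharP K 2]

lemma exists_shiftQuadratic_eq_mul (c : ℕ → K) :
    ∃ ρ σ : K, (∀ y, shiftQuadratic c y = (y + (ρ ^ 2 + ρ)) * (y + (σ ^ 2 + σ))) ∧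
      depressedSextic c ρ * depressedSextic c σ = lambdaTwoChern c := by
  obtain ⟨α, β, hadd, hmul⟩ := exists_add_eq_and_mul_eq (c 3) (shiftConst c)
  obtain ⟨ρ, rfl⟩ := exists_sq_add_self_eq α
  obtain ⟨σ, rfl⟩ := exists_sq_add_self_eq β
  have factorization (y : K) :
      shiftQuadratic c y = (y + (ρ ^ 2 + ρ)) * (y + (σ ^ 2 + σ)) := by
    rw [shiftQuadratic, ← hadd, ← hmul]
    ring
  have root_ρ : shiftQuadratic c (ρ ^ 2 + ρ) = 0 := by
    rw [factorization, CharTwo.add_self_eq_zero, zero_mul]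
  have root_σ : shiftQuadratic c (σ ^ 2 + σ) = 0 := by
    rw [factorization, CharTwo.add_self_eq_zero, mul_zero]
  refine ⟨ρ, σ, factorization, ?_⟩
  rw [depressedSextic_eq_mul_shiftQuadratic_add c ρ, depressedSextic_eq_mul_shiftQuadratic_add c σ,
    root_ρ, root_σ, lambdaTwoChern]
  linear_combination remainderSlope c ^ 2 * hmul + remainderSlope c * remainderConst c * hadd

variable {ι : Type*} [Fintype ι] {t : ι → K} {c : ℕ → K}

lemma prod_shiftQuadratic_eq_sq_lambdaTwoChern
    (hc : ∀ x, ∏ i, (x + t i) = depressedSextic c x) :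
    ∏ j, shiftQuadratic c (t j ^ 2 + t j) = lambdaTwoChern c ^ 2 := by
  obtain ⟨ρ, σ, factorization, mul_eq⟩ := exists_shiftQuadratic_eq_mul c
  have depressedSextic_add_one_of_root {x : K} (hx : shiftQuadratic c (x ^ 2 + x) = 0) :
      depressedSextic c (x + 1) = depressedSextic c x := by
    rw [depressedSextic_add_one, hx, add_zero]
  have root_factor (j : ι) (x : K) :
      t j ^ 2 + t j + (x ^ 2 + x) = (x + t j) * (x + 1 + t j) := by
    linear_combination -(x * t j) * CharTwo.two_eq_zero (R := K)
  calc ∏ j, shiftQuadratic c (t j ^ 2 + t j)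
      = (∏ j, (ρ + t j)) * (∏ j, (ρ + 1 + t j)) *
          ((∏ j, (σ + t j)) * ∏ j, (σ + 1 + t j)) := by
        simp only [factorization, root_factor, prod_mul_distrib]
    _ = (depressedSextic c ρ * depressedSextic c σ) ^ 2 := by
        simp only [hc]
        rw [depressedSextic_add_one_of_root (by simp [factorization, CharTwo.add_self_eq_zero]),
          depressedSextic_add_one_of_root (by simp [factorization, CharTwo.add_self_eq_zero])]
        ring
    _ = lambdaTwoChern c ^ 2 := by rw [mul_eq]

lemma prod_lt_one_add_add_eq_lambdaTwoChern [LinearOrder ι]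
    (hc : ∀ x, ∏ i, (x + t i) = depressedSextic c x) :
    ∏ p ∈ univ.filter (fun p : ι × ι => p.1 < p.2), (1 + t p.1 + t p.2) = lambdaTwoChern c := by
  have root (j : ι) : depressedSextic c (t j) = 0 := by
    rw [← hc, prod_eq_zero (mem_univ j) (CharTwo.add_self_eq_zero _)]
  have row_prod (j : ι) : ∏ i, (1 + t j + t i) = shiftQuadratic c (t j ^ 2 + t j) := by
    rw [hc, add_comm, depressedSextic_add_one, root, zero_add]
  refine CharTwo.sq_injective ?_
  calc (∏ p ∈ univ.filter (fun p : ι × ι => p.1 < p.2), (1 + t p.1 + t p.2)) ^ 2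
      = ∏ j, ∏ i, (1 + t j + t i) :=
        (prod_prod_eq_sq_prod_lt (fun j i => 1 + t j + t i) (fun _ _ => add_right_comm _ _ _)
          fun j => by rw [add_assoc, CharTwo.add_self_eq_zero, add_zero]).symm
    _ = lambdaTwoChern c ^ 2 := by
        simp only [row_prod, prod_shiftQuadratic_eq_sq_lambdaTwoChern hc]

end AlgClosedCharTwo

theorem chern_lambda2_SU6_general {R : Type*} [CommRing R] [IsDomain R] [CharP R 2] :
    (∏ p ∈ univ.filter (fun p : Fin 6 × Fin 6 => p.1 < p.2), (1 + X p.1 + X p.2))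
      - lambdaTwoChern (esymm (Fin 6) R) ∈ Ideal.span {esymm (Fin 6) R 1} := by
  refine mem_span_esymm_one_of_forall_aeval_eq_zero fun K _ _ _ t ht => ?_
  have : CharP K 2 := CharTwo.of_one_ne_zero_of_two_eq_zero one_ne_zero <| by
    simpa only [map_ofNat, map_zero] using
      congrArg (algebraMap R K) (CharTwo.two_eq_zero (R := R))
  rw [map_sub, sub_eq_zero, map_lambdaTwoChern]
  simpa only [map_prod, map_add, map_one, aeval_X] using
    prod_lt_one_add_add_eq_lambdaTwoChern (prod_add_eq_depressedSextic (R := R) ht)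

/-- in `𝔽₂[t₁,…,t₆]`, `∏_{1≤j<k≤6} (1 + t_j + t_k)` is congruent
to the displayed polynomial in `e₂,…,e₆` modulo the ideal `(e₁)`; this is the
mod 2 total Chern class of `λ² : SU(6) → SU(15)`. -/
theorem chern_lambda2_SU6 :
    (∏ p ∈ univ.filter (fun p : Fin 6 × Fin 6 => p.1 < p.2),
        (1 + X p.1 + X p.2) : MvPolynomial (Fin 6) (ZMod 2))
      - (1 + (e 3 * e 5 + e 4 ^ 2 + e 2 ^ 4)
          + (e 2 * e 5 ^ 2 + e 3 ^ 2 * e 6 + e 3 * e 4 * e 5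
              + e 2 ^ 2 * e 3 * e 5 + e 2 ^ 2 * e 4 ^ 2 + e 3 ^ 4 + e 6 ^ 2)
          + (e 3 * e 5 * e 6 + e 4 * e 5 ^ 2 + e 2 ^ 2 * e 5 ^ 2
              + e 2 * e 3 ^ 2 * e 6 + e 2 * e 3 * e 4 * e 5
              + e 3 ^ 3 * e 5 + e 3 ^ 2 * e 4 ^ 2)
          + (e 5 ^ 3 + e 2 * e 3 * e 5 ^ 2 + e 3 ^ 3 * e 6 + e 3 ^ 2 * e 4 * e 5))
      ∈ Ideal.span {e 1} := by
  rw [← lambdaTwoChern_eq]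
  exact chern_lambda2_SU6_general
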